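/- Let X be a pure d-dimensional simplicial complex, 0 ≤ i < d, 0 < η < 1 a fatness constant. Then for every i-cochain W and every 0 ≤ j ≤ i, Pr[P_{i+1} ∈ Γ(W) and P_{j−1} ∉ S^{j−1}(W)] ≥ η^(2^(i−j)−1) · Pr[P_j ∈ S^j(W) and P_{j−1} ∉ S^{j−1}(W)]. -/

import Mathlib

/-!
The walk `P_d, P_{d-1}, …` read upwards is a Markov chain: from a face `σ` it moves to a coface
`ρ` with probability proportional to `deg ρ`, independently of the smaller faces of the chain.
A fat `k`-face is by definition one from which the walk moves up into the fat `(k+1)`-faces with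
probability at least `η ^ 2 ^ (i-k-1)`. Chaining these moves from `S^j(W)` up to `S^i(W) = W`
keeps at least the fraction `η ^ (2^(i-j-1) + ⋯ + 2 + 1) = η ^ (2^(i-j) - 1)` of the probability,
whatever is asked of `P_{j-1}`, and every coface of a face of `W` lies in `Γ(W)`.

One move is `SC.prNI_step`. There the Markov property amounts to three double counts:
`SC.sum_deg_above` (weight of the cofaces of a face), `SC.sum_deg_succ` (comparison of the
normalizing constants in consecutive dimensions) and `SC.sum_card_notMem` (a uniform subset
of a uniform facet is a uniform subset). The moves are composed in `SC.prNI_fat`, and the last one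
is `SC.prNI_container`.
-/

open Finset

open scoped Classical

noncomputable section

/-- A pure `d`-dimensional simplicial complex on a finite vertex set `V`: a collection of
finite subsets of `V` (the faces), containing the empty face, closed under taking subsets,
in which every face is contained in a face of cardinality `d+1`. -/
structure SC (V : Type) [DecidableEq V] [Fintype V] (d : ℕ) where
  faces : Finset (Finset V)
  empty_mem : ∅ ∈ faces
  down_closed : ∀ σ ∈ faces, ∀ τ ⊆ σ, τ ∈ faces
  pure : ∀ σ ∈ faces, ∃ τ ∈ faces, σ ⊆ τ ∧ τ.card = d + 1

namespace SC

variable {V : Type} [DecidableEq V] [Fintype V] {d : ℕ}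

/-- The faces of cardinality `k`, i.e. the set `X(k-1)` of `(k-1)`-dimensional faces. -/
def fc (X : SC V d) (k : ℕ) : Finset (Finset V) :=
  X.faces.filter fun σ => σ.card = k

/-- The degree of a face: the number of top (`d`-dimensional) faces containing it. -/
def deg (X : SC V d) (σ : Finset V) : ℕ :=
  ((X.fc (d + 1)).filter fun τ => σ ⊆ τ).card

/-- The norm of a set `W` of faces of cardinality `k`:
`‖W‖ = (Σ_{σ∈W} deg σ) / (Σ_{τ∈X(k-1)} deg τ)`. -/
def norm (X : SC V d) (k : ℕ) (W : Finset (Finset V)) : ℝ :=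
  (∑ σ ∈ (X.fc k).filter (· ∈ W), (X.deg σ : ℝ)) / ∑ σ ∈ X.fc k, (X.deg σ : ℝ)

/-- `‖A_σ‖_σ`: the norm, computed inside the link of `σ`, of the localization to the link
of a set `A` of cardinality-`k` faces of `X`.  (The faces of the link of `σ` correspond
bijectively to the faces `ρ ⊇ σ` of `X` via `τ ↦ σ ∪ τ`, and this correspondence
preserves degrees.) -/
def linkNorm (X : SC V d) (σ : Finset V) (k : ℕ) (A : Finset (Finset V)) : ℝ :=
  (∑ ρ ∈ (X.fc k).filter (fun ρ => σ ⊆ ρ ∧ ρ ∈ A), (X.deg ρ : ℝ)) /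
    ∑ ρ ∈ (X.fc k).filter (fun ρ => σ ⊆ ρ), (X.deg ρ : ℝ)

/-- For a set `S` of vertices, the norm `‖·‖_σ` in the link of `σ` of the set of
`(m-1)`-dimensional faces of the link all of whose vertices lie in `S`.
For `m = 1` this is `‖S‖_σ` and for `m = 2` it is `‖E(S)‖_σ`. -/
def linkSubsetNorm (X : SC V d) (σ : Finset V) (m : ℕ) (S : Finset V) : ℝ :=
  (∑ ρ ∈ (X.fc (σ.card + m)).filter (fun ρ => σ ⊆ ρ ∧ ρ \ σ ⊆ S), (X.deg ρ : ℝ)) /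
    ∑ ρ ∈ (X.fc (σ.card + m)).filter (fun ρ => σ ⊆ ρ), (X.deg ρ : ℝ)

/-- `X` is an `α`-skeleton expander: for every face `σ ∈ X` (including `σ = ∅`) and every
set `S` of vertices of the link of `σ`, `‖E(S)‖_σ ≤ ‖S‖_σ (‖S‖_σ + α)`. -/
def IsSkeletonExpander (X : SC V d) (α : ℝ) : Prop :=
  ∀ σ ∈ X.faces, ∀ S : Finset V,
    X.linkSubsetNorm σ 2 S ≤ X.linkSubsetNorm σ 1 S * (X.linkSubsetNorm σ 1 S + α)

/-- The expanding faces `ψ(W)` of a set `W` of cardinality-`k` faces: the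
cardinality-`(k+1)` faces containing both a cardinality-`k` face in `W` and a
cardinality-`k` face not in `W`. -/
def psi (X : SC V d) (k : ℕ) (W : Finset (Finset V)) : Finset (Finset V) :=
  (X.fc (k + 1)).filter fun τ =>
    (∃ σ ⊆ τ, σ.card = k ∧ σ ∈ W) ∧ ∃ σ ⊆ τ, σ.card = k ∧ σ ∉ W

/-- `X` is an `ε`-colorful expander: for every `0 ≤ i < d` and every `i`-cochain `W` with
`0 < ‖W‖ ≤ 1/2`, one has `‖ψ(W)‖/‖W‖ ≥ ε`. -/
def IsColorfulExpander (X : SC V d) (ε : ℝ) : Prop :=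
  ∀ i : ℕ, i < d → ∀ W ⊆ X.fc (i + 1),
    0 < X.norm (i + 1) W → X.norm (i + 1) W ≤ 1 / 2 →
    ε ≤ X.norm (i + 2) (X.psi (i + 1) W) / X.norm (i + 1) W

/-- The container `Γ(W)` of a set `W` of cardinality-`k` faces: the cardinality-`(k+1)`
faces containing at least one cardinality-`k` face of `W`. -/
def container (X : SC V d) (k : ℕ) (W : Finset (Finset V)) : Finset (Finset V) :=
  (X.fc (k + 1)).filter fun τ => ∃ σ ⊆ τ, σ.card = k ∧ σ ∈ W

/-- Fat faces: for an `i`-cochain `W` and fatness constant `η`, `X.fat i W η m` is the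
set `S^{i-m}(W)` of fat faces of dimension `i - m` (so of cardinality `i + 1 - m`);
`m = i + 1` gives `S^{-1}(W)`. -/
def fat (X : SC V d) (i : ℕ) (W : Finset (Finset V)) (η : ℝ) : ℕ → Finset (Finset V)
  | 0 => (X.fc (i + 1)).filter (· ∈ W)
  | m + 1 => (X.fc (i - m)).filter fun σ =>
      η ^ 2 ^ m ≤ X.linkNorm σ (i - m + 1) (fat X i W η m)

/-- Full faces: `X.full i W η j` is `F^j(W)`, the set of cardinality-`(j+1)` faces all of
whose cardinality-`j` subsets lie in `S^{j-1}(W) = X.fat i W η (i + 1 - j)`. -/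
def full (X : SC V d) (i : ℕ) (W : Finset (Finset V)) (η : ℝ) (j : ℕ) :
    Finset (Finset V) :=
  (X.fc (j + 1)).filter fun τ => ∀ σ ⊆ τ, σ.card = j → σ ∈ X.fat i W η (i + 1 - j)

/-- `X.prNI ka kb A B` is the probability `Pr[P_{ka-1} ∈ A ∧ P_{kb-1} ∉ B]` for the chain
`P_d ⊃ P_{d-1} ⊃ ⋯` in which `P_d` is a uniformly random top face and each `P_{l-1}` is
obtained from `P_l` by deleting a uniformly random vertex.  (Given `P_{ka-1} = σ`,
the face `P_{kb-1}` is a uniformly random cardinality-`kb` subset of `σ`, and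
`Pr[P_{ka-1} = σ] = deg σ / Σ_{τ ∈ X(ka-1)} deg τ`.) -/
def prNI (X : SC V d) (ka kb : ℕ) (A B : Finset (Finset V)) : ℝ :=
  (∑ σ ∈ (X.fc ka).filter (· ∈ A),
      (X.deg σ : ℝ) * (((σ.powersetCard kb).filter (· ∉ B)).card : ℝ)) /
    ((ka.choose kb : ℝ) * ∑ σ ∈ X.fc ka, (X.deg σ : ℝ))

end SC

/-! ### Multigraphs, given by symmetric adjacency-count matrices -/

/-- Degree of a vertex in the multigraph with adjacency counts `A`. -/
def mdeg {U : Type} [Fintype U] (A : U → U → ℕ) (v : U) : ℕ := ∑ u, A v u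

/-- The transition matrix `DA` of the random walk on the multigraph `A`. -/
def transition {U : Type} [Fintype U] (A : U → U → ℕ) : Matrix U U ℝ :=
  Matrix.of fun u v => (A u v : ℝ) / (mdeg A u : ℝ)

/-- The normalized adjacency matrix `Ã = D^(1/2) A D^(1/2)`. -/
def normAdj {U : Type} [Fintype U] (A : U → U → ℕ) : Matrix U U ℝ :=
  Matrix.of fun u v => (A u v : ℝ) / (Real.sqrt (mdeg A u) * Real.sqrt (mdeg A v))

/-- The stationary distribution `π(v) = deg v / Σ_u deg u`. -/
def statDist {U : Type} [Fintype U] (A : U → U → ℕ) (v : U) : ℝ :=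
  (mdeg A v : ℝ) / ∑ u, (mdeg A u : ℝ)

/-- Maximum degree. -/
def dmaxDeg {U : Type} [Fintype U] (A : U → U → ℕ) : ℕ := ⨆ v, mdeg A v

/-- Minimum degree. -/
def dminDeg {U : Type} [Fintype U] (A : U → U → ℕ) : ℕ := ⨅ v, mdeg A v

/-- The random walk on the multigraph `A` is `μ`-rapidly mixing: for every initial
probability distribution `π0` and every `t`, `‖π0 (DA)^t − π‖₂ ≤ √(dmax/dmin) μ^t`. -/
def IsRapidMixing {U : Type} [Fintype U] [DecidableEq U] (A : U → U → ℕ) (μ : ℝ) : Prop :=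
  ∀ π0 : U → ℝ, (∀ v, 0 ≤ π0 v) → ∑ v, π0 v = 1 → ∀ t : ℕ,
    Real.sqrt (∑ v, (Matrix.vecMul π0 (transition A ^ t) v - statDist A v) ^ 2) ≤
      Real.sqrt ((dmaxDeg A : ℝ) / (dminDeg A : ℝ)) * μ ^ t

/-- The lazy version of a multigraph: add `deg v` self-loops at every vertex `v`. -/
def lazy {U : Type} [Fintype U] [DecidableEq U] (A : U → U → ℕ) : U → U → ℕ :=
  fun u v => A u v + if u = v then mdeg A u else 0

/-- `|E(S, S̄)|`: the number of edges with one endpoint in `S` and one in its complement. -/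
def cutEdges {U : Type} [Fintype U] [DecidableEq U] (A : U → U → ℕ) (S : Finset U) : ℝ :=
  ∑ u ∈ S, ∑ v ∈ Sᶜ, (A u v : ℝ)

/-- `vol S = Σ_{v ∈ S} deg v`. -/
def vol {U : Type} [Fintype U] (A : U → U → ℕ) (S : Finset U) : ℝ :=
  ∑ v ∈ S, (mdeg A v : ℝ)

/-- The conductance `Φ(G) = min { |E(S,S̄)|/vol S : ∅ ≠ S, vol S ≤ vol V / 2 }`. -/
def conductance {U : Type} [Fintype U] [DecidableEq U] (A : U → U → ℕ) : ℝ :=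
  sInf { x : ℝ | ∃ S : Finset U, S.Nonempty ∧ vol A S ≤ vol A Finset.univ / 2 ∧
    x = cutEdges A S / vol A S }

/-- `|E(T)|`: the number of edges with both endpoints in `T`. -/
def edgesWithin {U : Type} [Fintype U] (A : U → U → ℕ) (T : Finset U) : ℝ :=
  ((∑ u ∈ T, ∑ v ∈ T, (A u v : ℝ)) + ∑ v ∈ T, (A v v : ℝ)) / 2

/-- The bipartiteness ratio
`β(G) = min {(|E(S,S̄)| + 2(|E(S1)| + |E(S2)|))/vol S : S = S1 ⊔ S2 ≠ ∅}`. -/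
def bipRatio {U : Type} [Fintype U] [DecidableEq U] (A : U → U → ℕ) : ℝ :=
  sInf { x : ℝ | ∃ S1 S2 : Finset U, (S1 ∪ S2).Nonempty ∧ Disjoint S1 S2 ∧
    x = (cutEdges A (S1 ∪ S2) + 2 * (edgesWithin A S1 + edgesWithin A S2)) /
      vol A (S1 ∪ S2) }

/-- The adjacency counts of the `i`-graph `G_i(X)`: its vertices are the `i`-faces of `X`
(cardinality `i+1`), and two neighboring `i`-faces `σ ∼ τ` (i.e. `σ ∪ τ ∈ X(i+1)`) are
joined by `deg (σ ∪ τ)` parallel edges. -/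
def SC.adjG {V : Type} [DecidableEq V] [Fintype V] {d : ℕ} (X : SC V d) (i : ℕ) :
    {σ // σ ∈ X.fc (i + 1)} → {σ // σ ∈ X.fc (i + 1)} → ℕ :=
  fun σ τ => if σ.1 ∪ τ.1 ∈ X.fc (i + 2) then X.deg (σ.1 ∪ τ.1) else 0

end

namespace SC

variable {V : Type} [DecidableEq V]

/-! ### Counting sets between two given ones -/

lemma card_between_succ {k : ℕ} {σ τ : Finset V} (h : σ ⊆ τ) (hσ : σ.card = k) :
    ((τ.powersetCard (k + 1)).filter (σ ⊆ ·)).card = τ.card - k := by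
  have himg : (τ.powersetCard (k + 1)).filter (σ ⊆ ·) =
      (τ \ σ).image (fun v => insert v σ) := by
    ext ρ
    simp only [mem_filter, mem_powersetCard, mem_image, mem_sdiff]
    constructor
    · rintro ⟨⟨h1, h2⟩, h3⟩
      have hc : (ρ \ σ).card = 1 := by rw [card_sdiff_of_subset h3]; omega
      obtain ⟨v, hv⟩ := card_eq_one.1 hc
      have hvm : v ∈ ρ \ σ := by simp [hv]
      rw [mem_sdiff] at hvm
      refine ⟨v, ⟨h1 hvm.1, hvm.2⟩, ?_⟩
      rw [insert_eq, ← hv, sdiff_union_of_subset h3]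
    · rintro ⟨v, ⟨hv, hv'⟩, rfl⟩
      exact ⟨⟨insert_subset hv h, by rw [card_insert_of_notMem hv', hσ]⟩, subset_insert _ _⟩
  rw [himg, card_image_of_injOn, card_sdiff_of_subset h, hσ]
  intro v hv w hw hvw
  simp only [coe_sdiff, Set.mem_sdiff, mem_coe] at hv hw
  have : v ∈ insert w σ := by
    rw [← show insert v σ = insert w σ from hvw]
    exact mem_insert_self _ _
  exact (mem_insert.1 this).resolve_right hv.2

lemma card_between_pred {j k : ℕ} {τ ρ : Finset V} (h : τ ⊆ ρ) (hτ : τ.card = j)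
    (hρ : ρ.card = k + 1) :
    ((ρ.powersetCard k).filter (τ ⊆ ·)).card = k + 1 - j := by
  have himg : (ρ.powersetCard k).filter (τ ⊆ ·) = (ρ \ τ).image (fun v => ρ.erase v) := by
    ext σ
    simp only [mem_filter, mem_powersetCard, mem_image, mem_sdiff]
    constructor
    · rintro ⟨⟨h1, h2⟩, h3⟩
      have hc : (ρ \ σ).card = 1 := by rw [card_sdiff_of_subset h1]; omega
      obtain ⟨v, hv⟩ := card_eq_one.1 hc
      have hvm : v ∈ ρ \ σ := by simp [hv]
      rw [mem_sdiff] at hvm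
      refine ⟨v, ⟨hvm.1, fun h => hvm.2 (h3 h)⟩, ?_⟩
      rw [← sdiff_singleton_eq_erase, ← hv, Finset.sdiff_sdiff_eq_self h1]
    · rintro ⟨v, ⟨hv, hv'⟩, rfl⟩
      exact ⟨⟨erase_subset _ _, by rw [card_erase_of_mem hv, hρ]; rfl⟩,
        subset_erase.2 ⟨h, hv'⟩⟩
  rw [himg, card_image_of_injOn, card_sdiff_of_subset h, hτ, hρ]
  intro v hv w hw hvw
  simp only [coe_sdiff, Set.mem_sdiff, mem_coe] at hv hw
  by_contra hne
  have : v ∈ ρ.erase w := mem_erase.2 ⟨hne, hv.1⟩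
  rw [← show ρ.erase v = ρ.erase w from hvw] at this
  exact notMem_erase _ _ this

/-- Deleting a uniform vertex and then passing to a uniform `j`-subset gives a uniform
`j`-subset; here in counting form, for the `j`-subsets avoiding `B`. -/
lemma sum_card_notMem (B : Finset (Finset V)) {j k : ℕ} {ρ : Finset V}
    (hρ : ρ.card = k + 1) :
    ∑ σ ∈ ρ.powersetCard k, ((σ.powersetCard j).filter (· ∉ B)).card =
      (k + 1 - j) * ((ρ.powersetCard j).filter (· ∉ B)).card := by
  simp only [card_eq_sum_ones]
  rw [sum_comm' (t' := (ρ.powersetCard j).filter (· ∉ B))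
    (s' := fun τ => (ρ.powersetCard k).filter (τ ⊆ ·)), mul_sum]
  · refine sum_congr rfl fun τ hτ => ?_
    rw [mem_filter, mem_powersetCard] at hτ
    rw [← card_eq_sum_ones, card_between_pred hτ.1.1 hτ.1.2 hρ, mul_one]
  · intro σ τ
    simp only [mem_filter, mem_powersetCard]
    constructor
    · rintro ⟨⟨h1, h2⟩, ⟨h3, h4⟩, h5⟩
      exact ⟨⟨⟨h1, h2⟩, h3⟩, ⟨h3.trans h1, h4⟩, h5⟩
    · rintro ⟨⟨⟨h1, h2⟩, h3⟩, ⟨h4, h5⟩, h6⟩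
      exact ⟨⟨h1, h2⟩, ⟨h3, h5⟩, h6⟩

variable [Fintype V] {d : ℕ}

/-! ### Degrees in consecutive dimensions -/

lemma mem_fc (X : SC V d) {k : ℕ} {σ : Finset V} :
    σ ∈ X.fc k ↔ σ ∈ X.faces ∧ σ.card = k := by
  simp [fc]

lemma fc_of_subset (X : SC V d) {k l : ℕ} {σ ρ : Finset V} (hρ : ρ ∈ X.fc l)
    (h : σ ⊆ ρ) (hc : σ.card = k) : σ ∈ X.fc k :=
  X.mem_fc.2 ⟨X.down_closed ρ (X.mem_fc.1 hρ).1 σ h, hc⟩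

lemma fc_filter_subset (X : SC V d) {k l : ℕ} {ρ : Finset V} (hρ : ρ ∈ X.fc l) :
    (X.fc k).filter (· ⊆ ρ) = ρ.powersetCard k := by
  ext σ
  simp only [mem_filter, mem_powersetCard]
  exact ⟨fun h => ⟨h.2, (X.mem_fc.1 h.1).2⟩, fun h => ⟨X.fc_of_subset hρ h.1 h.2, h.1⟩⟩

/-- A `k`-element face lies in `d + 1 - k` faces with one more vertex inside each top face
above it, whence this weighted count. -/
lemma sum_deg_above (X : SC V d) {k : ℕ} {σ : Finset V} (hσ : σ ∈ X.fc k) :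
    ∑ ρ ∈ (X.fc (k + 1)).filter (fun ρ => σ ⊆ ρ), X.deg ρ = (d + 1 - k) * X.deg σ := by
  have hcard := (X.mem_fc.1 hσ).2
  simp only [deg, card_eq_sum_ones]
  rw [sum_comm' (t' := (X.fc (d + 1)).filter (σ ⊆ ·))
    (s' := fun τ => (τ.powersetCard (k + 1)).filter (σ ⊆ ·)), mul_sum]
  · refine sum_congr rfl fun τ hτ => ?_
    rw [mem_filter] at hτ
    rw [← card_eq_sum_ones, card_between_succ hτ.2 hcard, (X.mem_fc.1 hτ.1).2, mul_one]
  · intro ρ τ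
    simp only [mem_filter, mem_powersetCard]
    constructor
    · rintro ⟨⟨h1, h2⟩, h3, h4⟩
      exact ⟨⟨⟨h4, (X.mem_fc.1 h1).2⟩, h2⟩, h3, h2.trans h4⟩
    · rintro ⟨⟨⟨h1, h2⟩, h3⟩, h4, h5⟩
      exact ⟨⟨X.fc_of_subset h4 h1 h2, h3⟩, h4, h1⟩

lemma sum_deg_succ (X : SC V d) (k : ℕ) :
    (d + 1 - k) * ∑ σ ∈ X.fc k, X.deg σ = (k + 1) * ∑ ρ ∈ X.fc (k + 1), X.deg ρ := by
  rw [mul_sum, ← sum_congr rfl fun σ hσ => X.sum_deg_above hσ,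
    sum_comm' (t' := X.fc (k + 1)) (s' := fun ρ => (X.fc k).filter (· ⊆ ρ)), mul_sum]
  · refine sum_congr rfl fun ρ hρ => ?_
    rw [X.fc_filter_subset hρ, sum_const, card_powersetCard, (X.mem_fc.1 hρ).2,
      Nat.choose_succ_self_right, smul_eq_mul]
  · intro σ ρ
    simp only [mem_filter]
    tauto

lemma sum_deg_pos (X : SC V d) {k : ℕ} (hk : k ≤ d + 1) : 0 < ∑ σ ∈ X.fc k, X.deg σ := by
  obtain ⟨τ, hτ, -, hc⟩ := X.pure ∅ X.empty_mem
  obtain ⟨σ, hσ, hσc⟩ := exists_subset_card_eq (hc ▸ hk : k ≤ τ.card)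
  have hτ' : τ ∈ X.fc (d + 1) := X.mem_fc.2 ⟨hτ, hc⟩
  refine sum_pos' (fun _ _ => Nat.zero_le _) ⟨σ, X.fc_of_subset hτ' hσ hσc, ?_⟩
  exact card_pos.2 ⟨τ, mem_filter.2 ⟨hτ', hσ⟩⟩

/-! ### Moving up the chain -/

/-- The Markov step: conditioned on `P_{k-1}`, the face one dimension up is independent of
`P_{j-1}`. So if from every face of `A` the walk moves up into `A'` with conditional probability
at least `c`, then the joint probability with `P_{j-1} ∉ B` one dimension up is at least `c` times
the one for `A`. -/
lemma prNI_step (X : SC V d) {j k : ℕ} (hjk : j ≤ k) (hk : k ≤ d) {c : ℝ}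
    (A A' B : Finset (Finset V))
    (h : ∀ σ ∈ X.fc k, σ ∈ A →
      c * ∑ ρ ∈ (X.fc (k + 1)).filter (fun ρ => σ ⊆ ρ), (X.deg ρ : ℝ) ≤
        ∑ ρ ∈ (X.fc (k + 1)).filter (fun ρ => σ ⊆ ρ ∧ ρ ∈ A'), (X.deg ρ : ℝ)) :
    c * X.prNI k j A B ≤ X.prNI (k + 1) j A' B := by
  set N : Finset V → ℝ := fun σ => (((σ.powersetCard j).filter (· ∉ B)).card : ℝ) with hN
  have hN0 : ∀ σ, 0 ≤ N σ := fun σ => Nat.cast_nonneg _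
  have key : c * ((d + 1 - k : ℕ) * ∑ σ ∈ (X.fc k).filter (· ∈ A), (X.deg σ : ℝ) * N σ) ≤
      (k + 1 - j : ℕ) * ∑ ρ ∈ (X.fc (k + 1)).filter (· ∈ A'), (X.deg ρ : ℝ) * N ρ := by
    calc c * ((d + 1 - k : ℕ) * ∑ σ ∈ (X.fc k).filter (· ∈ A), (X.deg σ : ℝ) * N σ)
        = ∑ σ ∈ (X.fc k).filter (· ∈ A),
            (c * ∑ ρ ∈ (X.fc (k + 1)).filter (fun ρ => σ ⊆ ρ), (X.deg ρ : ℝ)) * N σ := by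
          rw [mul_sum, mul_sum]
          refine sum_congr rfl fun σ hσ => ?_
          have := X.sum_deg_above (mem_filter.1 hσ).1
          have h2 : ∑ ρ ∈ (X.fc (k + 1)).filter (fun ρ => σ ⊆ ρ), (X.deg ρ : ℝ) =
              (d + 1 - k : ℕ) * (X.deg σ : ℝ) := by exact_mod_cast this
          rw [h2]; ring
      _ ≤ ∑ σ ∈ (X.fc k).filter (· ∈ A),
            ∑ ρ ∈ (X.fc (k + 1)).filter (fun ρ => σ ⊆ ρ ∧ ρ ∈ A'), (X.deg ρ : ℝ) * N σ := by
          refine sum_le_sum fun σ hσ => ?_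
          rw [← sum_mul]
          exact mul_le_mul_of_nonneg_right
            (h σ (mem_filter.1 hσ).1 (mem_filter.1 hσ).2) (hN0 σ)
      _ ≤ ∑ σ ∈ X.fc k,
            ∑ ρ ∈ (X.fc (k + 1)).filter (fun ρ => σ ⊆ ρ ∧ ρ ∈ A'), (X.deg ρ : ℝ) * N σ :=
          sum_le_sum_of_subset_of_nonneg (filter_subset _ _) fun σ _ _ =>
            sum_nonneg fun ρ _ => mul_nonneg (Nat.cast_nonneg _) (hN0 σ)
      _ = ∑ ρ ∈ (X.fc (k + 1)).filter (· ∈ A'),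
            ∑ σ ∈ (X.fc k).filter (· ⊆ ρ), (X.deg ρ : ℝ) * N σ := by
          refine sum_comm' fun σ ρ => ?_
          simp only [mem_filter]
          tauto
      _ = (k + 1 - j : ℕ) * ∑ ρ ∈ (X.fc (k + 1)).filter (· ∈ A'), (X.deg ρ : ℝ) * N ρ := by
          rw [mul_sum]
          refine sum_congr rfl fun ρ hρ => ?_
          have hρ' := (mem_filter.1 hρ).1
          have h2 : ∑ σ ∈ ρ.powersetCard k, N σ = (k + 1 - j : ℕ) * N ρ := by
            have h3 := sum_card_notMem B (j := j) (X.mem_fc.1 hρ').2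
            simp only [hN]
            exact_mod_cast h3
          rw [X.fc_filter_subset hρ', ← mul_sum, h2]
          ring
  have hD : ((d + 1 - k : ℕ) : ℝ) * ∑ σ ∈ X.fc k, (X.deg σ : ℝ) =
      (k + 1) * ∑ ρ ∈ X.fc (k + 1), (X.deg ρ : ℝ) := by exact_mod_cast X.sum_deg_succ k
  have hD0 : (0 : ℝ) < ∑ σ ∈ X.fc k, (X.deg σ : ℝ) := by
    exact_mod_cast X.sum_deg_pos (show k ≤ d + 1 by omega)
  have hD1 : (0 : ℝ) < ∑ σ ∈ X.fc (k + 1), (X.deg σ : ℝ) := by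
    exact_mod_cast X.sum_deg_pos (show k + 1 ≤ d + 1 by omega)
  have hC : ((k.choose j : ℕ) : ℝ) * (k + 1) = ((k + 1).choose j : ℕ) * (k + 1 - j : ℕ) := by
    exact_mod_cast Nat.choose_mul_succ_eq k j
  have hC0 : (0 : ℝ) < (k.choose j : ℕ) := by exact_mod_cast Nat.choose_pos hjk
  have hC1 : (0 : ℝ) < ((k + 1).choose j : ℕ) := by
    exact_mod_cast Nat.choose_pos (show j ≤ k + 1 by omega)
  have hd : (0 : ℝ) < (d + 1 - k : ℕ) := by exact_mod_cast (show 0 < d + 1 - k by omega)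
  unfold prNI
  rw [← mul_div_assoc, div_le_div_iff₀ (mul_pos hC0 hD0) (mul_pos hC1 hD1)]
  generalize (∑ σ ∈ (X.fc k).filter (· ∈ A), (X.deg σ : ℝ) * N σ) = n0 at *
  generalize (∑ ρ ∈ (X.fc (k + 1)).filter (· ∈ A'), (X.deg ρ : ℝ) * N ρ) = n1 at *
  generalize (∑ σ ∈ X.fc k, (X.deg σ : ℝ)) = D0 at *
  generalize (∑ σ ∈ X.fc (k + 1), (X.deg σ : ℝ)) = D1 at *
  -- Both sides are compared after multiplication by the positive number `d + 1 - k`.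
  refine le_of_mul_le_mul_left ?_ hd
  calc ((d + 1 - k : ℕ) : ℝ) * (c * n0 * (((k + 1).choose j : ℕ) * D1))
      = (c * ((d + 1 - k : ℕ) * n0)) * (((k + 1).choose j : ℕ) * D1) := by ring
    _ ≤ ((k + 1 - j : ℕ) * n1) * (((k + 1).choose j : ℕ) * D1) :=
        mul_le_mul_of_nonneg_right key (mul_pos hC1 hD1).le
    _ = n1 * ((((k + 1).choose j : ℕ) * (k + 1 - j : ℕ)) * D1) := by ring
    _ = n1 * (((k.choose j : ℕ)) * ((k + 1) * D1)) := by rw [← hC]; ring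
    _ = ((d + 1 - k : ℕ) : ℝ) * (n1 * ((k.choose j : ℕ) * D0)) := by rw [← hD]; ring

/-- Composing the Markov steps from a fat `(i-m)`-face up to `W`. The exponents
`2^(m-1), …, 2, 1` add up to `2^m - 1`. -/
lemma prNI_fat (X : SC V d) {i j : ℕ} (hi : i ≤ d) {η : ℝ} (hη : 0 ≤ η)
    (W B : Finset (Finset V)) (m : ℕ) (hm : m ≤ i) (hj : j ≤ i + 1 - m) :
    η ^ (2 ^ m - 1) * X.prNI (i + 1 - m) j (X.fat i W η m) B ≤
      X.prNI (i + 1) j (X.fat i W η 0) B := by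
  induction m with
  | zero => simp
  | succ m ih =>
    have hk : i + 1 - m = i - m + 1 := by omega
    refine le_trans ?_ (ih (by omega) (by omega))
    have hexp : 2 ^ (m + 1) - 1 = (2 ^ m - 1) + 2 ^ m := by
      have := Nat.one_le_two_pow (n := m)
      omega
    rw [hexp, pow_add, mul_assoc, hk, show i + 1 - (m + 1) = i - m by omega]
    refine mul_le_mul_of_nonneg_left ?_ (pow_nonneg hη _)
    refine X.prNI_step (by omega) (by omega) _ _ B fun σ hσ hσA => ?_
    have hfat : η ^ 2 ^ m ≤ X.linkNorm σ (i - m + 1) (X.fat i W η m) := (mem_filter.1 hσA).2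
    exact mul_le_of_le_div₀ (sum_nonneg fun _ _ => Nat.cast_nonneg _)
      (sum_nonneg fun _ _ => Nat.cast_nonneg _) hfat

/-- The last step: every coface of a face of `W` lies in `Γ(W)`, so the transition
probability is `1`. -/
lemma prNI_container (X : SC V d) {i j : ℕ} (hi : i < d) (hj : j ≤ i) (η : ℝ)
    (W B : Finset (Finset V)) :
    X.prNI (i + 1) j (X.fat i W η 0) B ≤ X.prNI (i + 2) j (X.container (i + 1) W) B := by
  rw [← one_mul (X.prNI (i + 1) j _ _)]
  refine X.prNI_step (by omega) (by omega) _ _ B fun σ hσ hσA => ?_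
  rw [one_mul]
  refine sum_le_sum_of_subset_of_nonneg (fun ρ hρ => ?_) fun _ _ _ => Nat.cast_nonneg _
  rw [mem_filter] at hρ ⊢
  exact ⟨hρ.1, hρ.2, mem_filter.2 ⟨hρ.1, σ, hρ.2, (X.mem_fc.1 hσ).2, (mem_filter.1 hσA).2⟩⟩

end SC

/-- **Large norm of fat faces implies large norm of the container of `W`.**
For every `i`-cochain `W` and `0 ≤ j ≤ i`,
`Pr[P_{i+1} ∈ Γ(W) ∧ P_{j−1} ∉ S^{j−1}(W)] ≥ η^(2^(i−j)−1) Pr[P_j ∈ S^j(W) ∧ P_{j−1} ∉ S^{j−1}(W)]`. -/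
theorem statement2 {V : Type} [DecidableEq V] [Fintype V] {d : ℕ} (X : SC V d)
    (i : ℕ) (hi : i < d) (η : ℝ) (hη0 : 0 < η) (hη1 : η < 1)
    (W : Finset (Finset V)) (hW : W ⊆ X.fc (i + 1))
    (j : ℕ) (hj : j ≤ i) :
    η ^ (2 ^ (i - j) - 1) *
        X.prNI (j + 1) j (X.fat i W η (i - j)) (X.fat i W η (i + 1 - j)) ≤
      X.prNI (i + 2) j (X.container (i + 1) W) (X.fat i W η (i + 1 - j)) := by
  have h := X.prNI_fat (j := j) hi.le hη0.le W (X.fat i W η (i + 1 - j)) (i - j)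
    (by omega) (by omega)
  rw [show i + 1 - (i - j) = j + 1 by omega] at h
  exact h.trans (X.prNI_container hi hj η W _)
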